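/- arXiv:1805.10838 — 2 statements merged into one kernel-verified Lean document; each statement's English description precedes it below -/
import Mathlib

section
/- The kernel function p_α(τ) = (1/Γ(α)) Σ_{0 ≤ j < τ} (−1)^j binom(α,j) (τ − j)^{α−1}, defined for τ > 0, satisfies ∫₀^∞ |p_α(τ)| dτ < ∞ and ∫₀^∞ p_α(τ) dτ = 1. -/
open MeasureTheory Set Real RealInnerProductSpace

noncomputable section

abbrev Evec (n : ℕ) := EuclideanSpace ℝ (Fin n)

/-- Generalized binomial coefficient `binom a j`. -/
def binomR (a : ℝ) (j : ℕ) : ℝ :=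
  (∏ i ∈ Finset.range j, (a - (i : ℝ))) / (Nat.factorial j : ℝ)

/-- Left-sided Riemann–Liouville fractional integral of order `α` with base point `0`. -/
def RLint {E : Type*} [NormedAddCommGroup E] [NormedSpace ℝ E]
    (α : ℝ) (f : ℝ → E) (t : ℝ) : E :=
  (Real.Gamma α)⁻¹ • ∫ τ in (0:ℝ)..t, ((t - τ) ^ (α - 1) : ℝ) • f τ

/-- Left-sided Riemann–Liouville fractional derivative of order `α` with base point `0`. -/
def RLderiv {E : Type*} [NormedAddCommGroup E] [NormedSpace ℝ E]
    (α : ℝ) (x : ℝ → E) (t : ℝ) : E :=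
  deriv (fun s => (Real.Gamma (1 - α))⁻¹ • ∫ τ in (0:ℝ)..s, ((s - τ) ^ (-α) : ℝ) • x τ) t

/-- Caputo fractional derivative of order `α` with base point `0`. -/
def CapDeriv {E : Type*} [NormedAddCommGroup E] [NormedSpace ℝ E]
    (α : ℝ) (x : ℝ → E) (t : ℝ) : E :=
  RLderiv α (fun s => x s - x 0) t

/-- Grünwald–Letnikov fractional difference of order `α` with step `h`. -/
def GLdiff {E : Type*} [NormedAddCommGroup E] [NormedSpace ℝ E]
    (α h : ℝ) (x : ℝ → E) (t : ℝ) : E :=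
  ∑ j ∈ Finset.range (⌊t / h⌋₊ + 1), ((-1 : ℝ) ^ j * binomR α j) • x (t - (j : ℝ) * h)

/-- The kernel `p_α`. -/
def pker (α : ℝ) (τ : ℝ) : ℝ :=
  (Real.Gamma α)⁻¹ * ∑ j ∈ Finset.range ⌈τ⌉₊, (-1 : ℝ) ^ j * binomR α j * ((τ - (j : ℝ)) ^ (α - 1) : ℝ)

/-- Mittag-Leffler function `E_α`. -/
def mittagLeffler (α z : ℝ) : ℝ := ∑' k : ℕ, z ^ k / Real.Gamma (α * (k : ℝ) + 1)

/-- `x` is a solution of the Caputo Cauchy problem `(^C D^α x)(t) = f(t, x(t))`, `x 0 = x₀`. -/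
def IsCaputoSol (α T : ℝ) {n : ℕ} (f : ℝ → Evec n → Evec n) (x₀ : Evec n)
    (x : ℝ → Evec n) : Prop :=
  (∃ φ : ℝ → Evec n, Measurable φ ∧
    (∃ C : ℝ, ∀ᵐ t ∂volume.restrict (Icc (0:ℝ) T), ‖φ t‖ ≤ C) ∧
    ∀ t ∈ Icc (0:ℝ) T, x t = x₀ + RLint α φ t) ∧
  ∀ᵐ t ∂volume.restrict (Icc (0:ℝ) T), CapDeriv α x t = f t (x t)

/-- `y` is a solution of the approximating retarded functional-differential Cauchy problem. -/
def IsApproxSol (α T h : ℝ) {n : ℕ} (f : ℝ → Evec n → Evec n) (x₀ : Evec n)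
    (y : ℝ → Evec n) : Prop :=
  (∃ Ly : NNReal, LipschitzOnWith Ly y (Icc (0:ℝ) T)) ∧ y 0 = 0 ∧
  ∀ᵐ t ∂volume.restrict (Icc (0:ℝ) T),
    HasDerivAt y (f t (x₀ + ((h ^ (α - 1) : ℝ)) • GLdiff (1 - α) h y t)) t

/-- `x` is a motion of the conflict-controlled Caputo system for realizations `u`, `v`. -/
def IsCtrlSol (α T : ℝ) {n nu nv : ℕ}
    (g : ℝ → Evec n → Evec nu → Evec nv → Evec n) (x₀ : Evec n)
    (u : ℝ → Evec nu) (v : ℝ → Evec nv) (x : ℝ → Evec n) : Prop :=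
  (∃ φ : ℝ → Evec n, Measurable φ ∧
    (∃ C : ℝ, ∀ᵐ t ∂volume.restrict (Icc (0:ℝ) T), ‖φ t‖ ≤ C) ∧
    ∀ t ∈ Icc (0:ℝ) T, x t = x₀ + RLint α φ t) ∧
  ∀ᵐ t ∂volume.restrict (Icc (0:ℝ) T), CapDeriv α x t = g t (x t) (u t) (v t)

/-- `y` is a motion of the approximating conflict-controlled system for realizations `ũ`, `ṽ`. -/
def IsCtrlApproxSol (α T h : ℝ) {n nu nv : ℕ}
    (g : ℝ → Evec n → Evec nu → Evec nv → Evec n) (x₀ : Evec n)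
    (ut : ℝ → Evec nu) (vt : ℝ → Evec nv) (y : ℝ → Evec n) : Prop :=
  (∃ Ly : NNReal, LipschitzOnWith Ly y (Icc (0:ℝ) T)) ∧ y 0 = 0 ∧
  ∀ᵐ t ∂volume.restrict (Icc (0:ℝ) T),
    HasDerivAt y (g t (x₀ + ((h ^ (α - 1) : ℝ)) • GLdiff (1 - α) h y t) (ut t) (vt t)) t

/-!
Let `c j = (-1) ^ j * binom(α, j)` and `b k = Γ(k + α) / (Γ(α) k!)` be the coefficients of
`(1 - z) ^ α` and of `(1 - z) ^ (-α)`, i.e. the values of `Ring.multichoose` at `-α` and at `α`.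
Replacing `x ^ (α - 1) / Γ(α)` in the kernel by the step function equal to `b k` on `(k, k + 1]`
turns `p_α` into the indicator of `(0, 1]`, because the two series are inverse to each other. Hence
`p_α` is this indicator plus `∑ j, c j * D(τ - j)`, where `D` is the error of the replacement.
Log-convexity of `Γ` traps `b k` between `(k + 1) ^ (α - 1) / Γ(α)` and `k ^ (α - 1) / Γ(α)`, so
`D(x) = O(x ^ (α - 2))` is integrable. The series `∑ c j` converges absolutely to `(1 - 1) ^ α = 0`,
so the second summand is integrable with integral `(∑ c j) * ∫ D = 0`.
-/

section Multichoose

lemma multichoose_succ_eq_mul_div {K : Type*} [Field K] [CharZero K] (r : K) (k : ℕ) :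
    Ring.multichoose r (k + 1) = Ring.multichoose r k * ((r + k) / (k + 1)) := by
  have hk : (k.factorial : K) ≠ 0 := Nat.cast_ne_zero.mpr k.factorial_ne_zero
  have hk1 : (k + 1 : K) ≠ 0 := Nat.cast_add_one_ne_zero k
  have rising (n : ℕ) : (n.factorial : K) * Ring.multichoose r n = (ascPochhammer K n).eval r := by
    rw [← nsmul_eq_mul, Ring.factorial_nsmul_multichoose_eq_ascPochhammer,
      Polynomial.ascPochhammer_smeval_eq_eval]
  have h := rising (k + 1)
  rw [ascPochhammer_succ_eval, ← rising k, Nat.factorial_succ] at h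
  push_cast at h
  field_simp
  refine mul_left_cancel₀ hk ?_
  linear_combination h

lemma multichoose_nonneg {K : Type*} [Field K] [LinearOrder K] [IsStrictOrderedRing K] {r : K}
    (hr : 0 ≤ r) (k : ℕ) : 0 ≤ Ring.multichoose r k := by
  induction k with
  | zero => simp
  | succ k ih =>
    rw [multichoose_succ_eq_mul_div]
    positivity

lemma antitone_multichoose {K : Type*} [Field K] [LinearOrder K] [IsStrictOrderedRing K] {r : K}
    (hr : r ∈ Icc 0 1) : Antitone (Ring.multichoose r) := by
  refine antitone_nat_of_succ_le fun k ↦ ?_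
  rw [multichoose_succ_eq_mul_div]
  refine mul_le_of_le_one_right (multichoose_nonneg hr.1 k) ?_
  rw [div_le_one (by positivity), add_comm]
  gcongr
  exact hr.2

lemma sum_antidiagonal_multichoose_mul {R : Type*} [CommRing R] [BinomialRing R] (r s : R)
    (n : ℕ) :
    ∑ ij ∈ Finset.HasAntidiagonal.antidiagonal n,
      Ring.multichoose r ij.1 * Ring.multichoose s ij.2 = Ring.multichoose (r + s) n := by
  have choose_neg_eq (t : R) (k : ℕ) : Ring.multichoose t k = (-1) ^ k * Ring.choose (-t) k := by
    rw [Ring.choose_neg', Units.smul_def, zsmul_eq_mul, ← mul_assoc]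
    simp [Int.negOnePow_def, ← mul_pow]
  rw [choose_neg_eq, neg_add, Ring.add_choose_eq n (Commute.all _ _), Finset.mul_sum]
  refine Finset.sum_congr rfl fun ij hij ↦ ?_
  rw [choose_neg_eq, choose_neg_eq, ← Finset.HasAntidiagonal.mem_antidiagonal.mp hij, pow_add]
  ring

lemma sum_range_succ_multichoose {R : Type*} [CommRing R] [BinomialRing R] (r : R) (n : ℕ) :
    ∑ j ∈ Finset.range (n + 1), Ring.multichoose r j = Ring.multichoose (r + 1) n := by
  rw [← sum_antidiagonal_multichoose_mul, Finset.Nat.sum_antidiagonal_eq_sum_range_succ_mk]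
  simp

lemma multichoose_eq_Gamma_div {b : ℝ} (hb : 0 < b) (k : ℕ) :
    Ring.multichoose b k = Gamma (k + b) / (Gamma b * k.factorial) := by
  induction k with
  | zero => simp [(Gamma_pos_of_pos hb).ne']
  | succ k ih =>
    have hkb : (k + b : ℝ) ≠ 0 := by positivity
    rw [multichoose_succ_eq_mul_div, ih, Nat.factorial_succ, Nat.cast_succ, add_right_comm,
      Gamma_add_one hkb]
    push_cast
    field_simp
    ring

end Multichoose

lemma Gamma_add_le_rpow_mul {x s : ℝ} (hx : 0 < x) (hs : s ∈ Ioo (0 : ℝ) 1) :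
    Gamma (x + s) ≤ x ^ s * Gamma x := by
  have hΓ := Gamma_pos_of_pos hx
  have hs' : 0 < 1 - s := sub_pos.mpr hs.2
  calc Gamma (x + s) = Gamma ((1 - s) * x + s * (x + 1)) := by ring_nf
    _ ≤ Gamma x ^ (1 - s) * Gamma (x + 1) ^ s :=
      Gamma_mul_add_mul_le_rpow_Gamma_mul_rpow_Gamma hx (by positivity) hs' hs.1 (by ring)
    _ = x ^ s * (Gamma x ^ (1 - s) * Gamma x ^ s) := by
      rw [Gamma_add_one hx.ne', mul_rpow hx.le hΓ.le, mul_left_comm]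
    _ = x ^ s * Gamma x := by rw [← rpow_add hΓ, sub_add_cancel, rpow_one]

lemma rpow_sub_one_sub_rpow_add_one_le {α y : ℝ} (hα : 0 ≤ α) (hy : 0 < y) :
    y ^ (α - 1) - (y + 1) ^ (α - 1) ≤ y ^ (α - 1) / (y + 1) := by
  have hy1 : 0 < y + 1 := by positivity
  have rpow_mono : y ^ α ≤ (y + 1) ^ α := by gcongr; linarith
  rw [rpow_sub_one hy.ne', rpow_sub_one hy1.ne']
  calc y ^ α / y - (y + 1) ^ α / (y + 1) ≤ y ^ α / y - y ^ α / (y + 1) := by gcongr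
    _ = y ^ α / y / (y + 1) := by field_simp; ring

section MultichooseBounds

variable {b : ℝ}

lemma multichoose_le_rpow_div_Gamma (hb : b ∈ Ioo (0 : ℝ) 1) {k : ℕ} (hk : k ≠ 0) :
    Ring.multichoose b k ≤ (k : ℝ) ^ (b - 1) / Gamma b := by
  have hk' : (0 : ℝ) < k := Nat.cast_pos.mpr hk.pos
  have hΓ := Gamma_pos_of_pos hb.1
  rw [multichoose_eq_Gamma_div hb.1, ← Gamma_nat_eq_factorial, Gamma_add_one hk'.ne',
    rpow_sub_one hk'.ne', div_le_div_iff₀ (by positivity) hΓ]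
  calc Gamma (k + b) * Gamma b ≤ k ^ b * Gamma k * Gamma b := by
        gcongr; exact Gamma_add_le_rpow_mul hk' hb
    _ = k ^ b / k * (Gamma b * (k * Gamma k)) := by field_simp

lemma rpow_div_Gamma_le_multichoose (hb : b ∈ Ioo (0 : ℝ) 1) (k : ℕ) :
    (k + 1 : ℝ) ^ (b - 1) / Gamma b ≤ Ring.multichoose b k := by
  have hkb : (0 : ℝ) < k + b := by have := hb.1; positivity
  have hΓ := Gamma_pos_of_pos hb.1
  have hb' : 1 - b ∈ Ioo (0 : ℝ) 1 := ⟨sub_pos.mpr hb.2, sub_lt_self 1 hb.1⟩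
  have factorial_le : (k.factorial : ℝ) ≤ (k + b) ^ (1 - b) * Gamma (k + b) := by
    rw [← Gamma_nat_eq_factorial]
    convert Gamma_add_le_rpow_mul hkb hb' using 2
    ring
  rw [multichoose_eq_Gamma_div hb.1, mul_comm (Gamma b), ← div_div]
  gcongr
  rw [le_div_iff₀ (by positivity)]
  calc (k + 1 : ℝ) ^ (b - 1) * k.factorial
      ≤ (k + b) ^ (b - 1) * ((k + b) ^ (1 - b) * Gamma (k + b)) := by
        gcongr ?_ * ?_
        exact rpow_le_rpow_of_nonpos hkb (by linarith [hb.2]) (by linarith [hb.2])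
    _ = Gamma (k + b) := by
        rw [← mul_assoc, ← rpow_add hkb, sub_add_sub_cancel', sub_self, rpow_zero, one_mul]

lemma tendsto_multichoose_atTop_zero (hb : b ∈ Ioo (0 : ℝ) 1) :
    Filter.Tendsto (Ring.multichoose b) Filter.atTop (nhds 0) := by
  have rpow_tendsto : Filter.Tendsto (fun k : ℕ ↦ (k : ℝ) ^ (b - 1) / Gamma b)
      Filter.atTop (nhds 0) := by
    have := (tendsto_rpow_neg_atTop (sub_pos.mpr hb.2)).comp
      (tendsto_natCast_atTop_atTop (R := ℝ))
    simpa [Function.comp_def] using this.div_const (Gamma b)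
  refine squeeze_zero' (.of_forall (multichoose_nonneg hb.1.le)) ?_ rpow_tendsto
  filter_upwards [Filter.eventually_ne_atTop 0] with k hk using multichoose_le_rpow_div_Gamma hb hk

end MultichooseBounds

lemma hasSum_multichoose_neg {α : ℝ} (hα : α ∈ Ioo (0 : ℝ) 1) :
    HasSum (Ring.multichoose (-α)) 0 := by
  have hb : 1 - α ∈ Ioo (0 : ℝ) 1 := ⟨sub_pos.mpr hα.2, sub_lt_self 1 hα.1⟩
  have eq_shift : -α + 1 = 1 - α := neg_add_eq_sub α 1
  have tail_nonneg (j : ℕ) : 0 ≤ -Ring.multichoose (-α) (j + 1) := by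
    have pascal := Ring.multichoose_succ_succ (-α) j
    rw [eq_shift] at pascal
    linarith [antitone_multichoose (Ioo_subset_Icc_self hb) j.le_succ]
  have tail_sum (n : ℕ) : 1 - Ring.multichoose (1 - α) n =
      ∑ j ∈ Finset.range n, -Ring.multichoose (-α) (j + 1) := by
    rw [← eq_shift, ← sum_range_succ_multichoose, Finset.sum_range_succ', Finset.sum_neg_distrib]
    simp
  have tail_hasSum : HasSum (fun j ↦ -Ring.multichoose (-α) (j + 1)) 1 := by
    rw [hasSum_iff_tendsto_nat_of_nonneg tail_nonneg, ← funext tail_sum]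
    simpa using (tendsto_multichoose_atTop_zero hb).const_sub 1
  simpa using (hasSum_nat_add_iff' 1).mp (by simpa using tail_hasSum.neg)

section IntegralTsum

lemma integrable_tsum_of_summable_integral_norm {X ι : Type*} [MeasurableSpace X] {μ : Measure X}
    [Countable ι] {F : ι → X → ℝ} (hF : ∀ i, Integrable (F i) μ)
    (hsum : Summable fun i ↦ ∫ x, ‖F i x‖ ∂μ) : Integrable (fun x ↦ ∑' i, F i x) μ := by
  refine ⟨(AEMeasurable.tsum fun i ↦ (hF i).aemeasurable).aestronglyMeasurable, ?_⟩
  calc ∫⁻ x, ‖∑' i, F i x‖ₑ ∂μ ≤ ∫⁻ x, ∑' i, ‖F i x‖ₑ ∂μ :=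
        lintegral_mono fun x ↦ enorm_tsum_le_tsum_enorm
    _ = ∑' i, ∫⁻ x, ‖F i x‖ₑ ∂μ := lintegral_tsum fun i ↦ (hF i).aestronglyMeasurable.enorm
    _ = ∑' i, ENNReal.ofReal (∫ x, ‖F i x‖ ∂μ) := by
        simp only [ofReal_integral_norm_eq_lintegral_enorm (hF _)]
    _ < ⊤ := hsum.tsum_ofReal_lt_top

variable {G ι : Type*} [AddGroup G] [MeasurableSpace G] [MeasurableAdd G] {μ : Measure G}
  [μ.IsAddRightInvariant] {c : ι → ℝ} {f : G → ℝ}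

lemma summable_integral_norm_mul_translate (hc : Summable c) (a : ι → G) :
    Summable fun i ↦ ∫ x, ‖c i * f (x - a i)‖ ∂μ := by
  simp only [norm_mul, integral_const_mul]
  simpa only [integral_sub_right_eq_self fun x ↦ ‖f x‖] using hc.norm.mul_right _

lemma integrable_tsum_mul_translate [Countable ι] (hc : Summable c) (hf : Integrable f μ)
    (a : ι → G) :
    Integrable (fun x ↦ ∑' i, c i * f (x - a i)) μ :=
  integrable_tsum_of_summable_integral_norm (fun i ↦ (hf.comp_sub_right (a i)).const_mul (c i))
    (summable_integral_norm_mul_translate hc a)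

lemma integral_tsum_mul_translate [Countable ι] (hc : Summable c) (hf : Integrable f μ)
    (a : ι → G) :
    ∫ x, ∑' i, c i * f (x - a i) ∂μ = (∑' i, c i) * ∫ x, f x ∂μ := by
  rw [← integral_tsum_of_summable_integral_norm
    (fun i ↦ (hf.comp_sub_right (a i)).const_mul (c i)) (summable_integral_norm_mul_translate hc a)]
  simp only [integral_const_mul, integral_sub_right_eq_self f, tsum_mul_right]

end IntegralTsum

lemma neg_one_pow_mul_binomR (a : ℝ) (j : ℕ) :
    (-1) ^ j * binomR a j = Ring.multichoose (-a) j := by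
  induction j with
  | zero => simp [binomR]
  | succ j ih =>
    rw [multichoose_succ_eq_mul_div, ← ih, binomR, binomR, Finset.prod_range_succ,
      Nat.factorial_succ]
    push_cast
    field_simp
    ring

/-- The error made in replacing the Riemann–Liouville kernel `x ↦ x₊ ^ (α - 1) / Γ(α)` by the step
function whose value on `(k, k + 1]` is the coefficient of `z ^ k` in `(1 - z) ^ (-α)`. -/
def rlKernelDefect (α : ℝ) : ℝ → ℝ :=
  (Ioi 0).indicator fun x ↦ x ^ (α - 1) / Gamma α - Ring.multichoose α (⌈x⌉₊ - 1)

lemma measurable_rlKernelDefect (α : ℝ) : Measurable (rlKernelDefect α) := by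
  have step : Measurable fun x : ℝ ↦ Ring.multichoose α (⌈x⌉₊ - 1) :=
    (measurable_of_countable fun k : ℕ ↦ Ring.multichoose α (k - 1)).comp Nat.measurable_ceil
  exact (((measurable_id.pow_const _).div_const _).sub step).indicator measurableSet_Ioi

lemma abs_rlKernelDefect_le {α x : ℝ} (hα : α ∈ Ioo (0 : ℝ) 1) (hx : 1 < x) :
    |rlKernelDefect α x| ≤ 2 ^ (1 - α) / Gamma α * x ^ (α - 2) := by
  have hΓ := Gamma_pos_of_pos hα.1
  have hx0 : 0 < x := by linarith
  have hα1 : α - 1 ≤ 0 := by linarith [hα.2]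
  obtain ⟨k, hk⟩ : ∃ k, ⌈x⌉₊ = k + 1 := Nat.exists_eq_succ_of_ne_zero (Nat.ceil_pos.mpr hx0).ne'
  obtain ⟨hkx, hxk⟩ : (k : ℝ) < x ∧ x ≤ k + 1 := by
    simpa using (Nat.ceil_eq_iff k.succ_ne_zero).mp hk
  have hk0 : k ≠ 0 := by rintro rfl; norm_num at hxk; linarith
  have hk1 : (1 : ℝ) ≤ k := Nat.one_le_cast.mpr hk0.pos
  have half_le : x / 2 ≤ k := by linarith
  have lower : (k + 1 : ℝ) ^ (α - 1) ≤ x ^ (α - 1) := rpow_le_rpow_of_nonpos hx0 hxk hα1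
  have upper : x ^ (α - 1) ≤ (k : ℝ) ^ (α - 1) :=
    rpow_le_rpow_of_nonpos (by linarith) hkx.le hα1
  rw [rlKernelDefect, indicator_of_mem (mem_Ioi.mpr hx0), hk, Nat.add_sub_cancel]
  calc |x ^ (α - 1) / Gamma α - Ring.multichoose α k|
      ≤ k ^ (α - 1) / Gamma α - (k + 1) ^ (α - 1) / Gamma α :=
        abs_sub_le_of_le_of_le (by gcongr) (by gcongr)
          (rpow_div_Gamma_le_multichoose hα k) (multichoose_le_rpow_div_Gamma hα hk0)
    _ = (k ^ (α - 1) - (k + 1) ^ (α - 1)) / Gamma α := (sub_div _ _ _).symm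
    _ ≤ k ^ (α - 1) / (k + 1) / Gamma α := by
        gcongr; exact rpow_sub_one_sub_rpow_add_one_le hα.1.le (by linarith)
    _ ≤ (x / 2) ^ (α - 1) / x / Gamma α := by
        gcongr ?_ / ?_ / _
        exact rpow_le_rpow_of_nonpos (by positivity) half_le hα1
    _ = 2 ^ (1 - α) / Gamma α * x ^ (α - 2) := by
        rw [div_rpow hx0.le zero_le_two, ← neg_sub 1 α, rpow_neg zero_le_two,
          show α - 2 = -(1 - α) - 1 by ring, rpow_sub_one hx0.ne']
        field_simp

lemma integrable_rlKernelDefect {α : ℝ} (hα : α ∈ Ioo (0 : ℝ) 1) :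
    Integrable (rlKernelDefect α) := by
  have near_zero : IntegrableOn (rlKernelDefect α) (Ioc 0 1) := by
    have rpow_int : IntegrableOn (fun x : ℝ ↦ x ^ (α - 1)) (Ioc 0 1) := by
      rw [← intervalIntegrable_iff_integrableOn_Ioc_of_le zero_le_one]
      exact intervalIntegral.intervalIntegrable_rpow' (by linarith [hα.1])
    have formula_int : IntegrableOn (fun x : ℝ ↦ x ^ (α - 1) / Gamma α - 1) (Ioc 0 1) :=
      (rpow_int.div_const _).sub (integrableOn_const (by simp))
    refine formula_int.congr_fun (fun x hx ↦ ?_) measurableSet_Ioc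
    have hceil : ⌈x⌉₊ = 1 := by rw [Nat.ceil_eq_iff one_ne_zero]; simpa using hx
    simp [rlKernelDefect, hx.1, hceil]
  have at_infinity : IntegrableOn (rlKernelDefect α) (Ioi 1) := by
    have rpow_int : IntegrableOn (fun x : ℝ ↦ x ^ (α - 2)) (Ioi 1) :=
      integrableOn_Ioi_rpow_of_lt (by linarith [hα.2]) one_pos
    refine (rpow_int.const_mul (2 ^ (1 - α) / Gamma α)).mono'
      (measurable_rlKernelDefect α).aestronglyMeasurable ?_
    filter_upwards [ae_restrict_mem measurableSet_Ioi] with x hx using abs_rlKernelDefect_le hα hx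
  have on_Ioi : IntegrableOn (rlKernelDefect α) (Ioi 0) := by
    rw [← Ioc_union_Ioi_eq_Ioi zero_le_one]
    exact near_zero.union at_infinity
  exact (integrableOn_iff_integrable_of_support_subset support_indicator_subset).mp on_Ioi

lemma sum_multichoose_neg_mul_multichoose_ceil (α τ : ℝ) :
    ∑ j ∈ Finset.range ⌈τ⌉₊, Ring.multichoose (-α) j * Ring.multichoose α (⌈τ - j⌉₊ - 1) =
      (Ioc 0 1).indicator 1 τ := by
  rcases hN : ⌈τ⌉₊ with _ | n
  · have hτ : τ ≤ 0 := Nat.ceil_eq_zero.mp hN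
    simp [hτ.not_gt]
  · have mem_iff : τ ∈ Ioc (0 : ℝ) 1 ↔ n = 0 := by
      simpa [hN] using (Nat.ceil_eq_iff (a := τ) one_ne_zero).symm
    have index (j : ℕ) : ⌈τ - j⌉₊ - 1 = n - j := by rw [Nat.ceil_sub_natCast]; lia
    simp only [index]
    rw [← Finset.Nat.sum_antidiagonal_eq_sum_range_succ
      fun i j ↦ Ring.multichoose (-α) i * Ring.multichoose α j, sum_antidiagonal_multichoose_mul,
      neg_add_cancel]
    rcases n with _ | n <;> simp [indicator, mem_iff]

lemma pker_eq_indicator_add_tsum (α τ : ℝ) :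
    pker α τ = (Ioc 0 1).indicator 1 τ +
      ∑' j : ℕ, Ring.multichoose (-α) j * rlKernelDefect α (τ - j) := by
  have vanish (j : ℕ) (hj : j ∉ Finset.range ⌈τ⌉₊) :
      Ring.multichoose (-α) j * rlKernelDefect α (τ - j) = 0 := by
    have hτj : τ - j ≤ 0 := sub_nonpos.mpr (Nat.ceil_le.mp (by simpa using hj))
    simp [rlKernelDefect, hτj.not_gt]
  have hpos (j : ℕ) (hj : j ∈ Finset.range ⌈τ⌉₊) : 0 < τ - j :=
    sub_pos.mpr (Nat.lt_ceil.mp (Finset.mem_range.mp hj))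
  rw [tsum_eq_sum vanish, ← sum_multichoose_neg_mul_multichoose_ceil α τ, ← Finset.sum_add_distrib,
    pker, Finset.mul_sum]
  refine Finset.sum_congr rfl fun j hj ↦ ?_
  rw [neg_one_pow_mul_binomR, rlKernelDefect, indicator_of_mem (mem_Ioi.mpr (hpos j hj))]
  ring

lemma pker_of_nonpos (α : ℝ) {τ : ℝ} (hτ : τ ≤ 0) : pker α τ = 0 := by
  simp [pker, Nat.ceil_eq_zero.mpr hτ]

theorem stmt6 (α : ℝ) (hα : α ∈ Ioo (0:ℝ) 1) :
    IntegrableOn (pker α) (Ioi (0:ℝ)) volume ∧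
    ∫ τ in Ioi (0:ℝ), pker α τ = 1 := by
  have coeff_sum := hasSum_multichoose_neg hα
  have defect_int := integrable_rlKernelDefect hα
  have series_int := integrable_tsum_mul_translate coeff_sum.summable defect_int ((↑) : ℕ → ℝ)
  have unit_int : Integrable ((Ioc (0 : ℝ) 1).indicator (1 : ℝ → ℝ)) :=
    (integrable_indicator_iff measurableSet_Ioc).mpr (integrableOn_const (by simp))
  rw [setIntegral_eq_integral_of_forall_compl_eq_zero (s := Ioi 0)
    (fun τ hτ ↦ pker_of_nonpos α (not_lt.mp hτ)), funext (pker_eq_indicator_add_tsum α)]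
  refine ⟨(unit_int.add series_int).integrableOn, ?_⟩
  rw [integral_add unit_int series_int,
    integral_tsum_mul_translate coeff_sum.summable defect_int, coeff_sum.tsum_eq, zero_mul,
    add_zero, integral_indicator_one measurableSet_Ioc]
  simp
end
end

section
/- Let f : [0,T]×ℝⁿ → ℝⁿ be measurable in t, locally Lipschitz in x uniformly in t, and satisfy ‖f(t,x)‖ ≤ (1+‖x‖)c_f. Then for any initial value x₀ ∈ B(R₀) there exists a unique solution x(·) ∈ {x₀} + I^α(L^∞) of the Caputo fractional Cauchy problem (^C D^α x)(t) = f(t,x(t)) a.e., x(0) = x₀. Moreover there exist R > 0 and H > 0, independent of x₀ ∈ B(R₀), such that ‖x(t)‖ ≤ R and ‖x(t) − x(τ)‖ ≤ H|t−τ|^α for all t,τ ∈ [0,T]. -/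
open MeasureTheory Set Real RealInnerProductSpace

noncomputable section

/-!
By the semigroup law `I^(1-α) I^α = I^1` and Lebesgue differentiation, the Caputo derivative of
`x₀ + I^α φ` is `φ` almost everywhere, so the Cauchy problem is equivalent to the Volterra equation
`x = x₀ + I^α f(·, x(·))`. Since `I^α` maps `exp (μ t)` below `μ^(-α) exp (μ t)`, in a norm with
weight `exp (-μ t)`, `μ` large, it can be made as small as desired. Hence the linear growth of `f`
confines solutions to a ball depending only on `‖x₀‖`, and on that ball `f` is Lipschitz, so the
Picard operator is a weighted contraction; this gives existence and uniqueness. The Hölder bound is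
that of `I^α` on bounded functions.
-/

open Filter Topology

section Triangle

variable {E : Type*} [NormedAddCommGroup E] {F : ℝ → ℝ → E} {a b : ℝ}

lemma integral_indicator_Ioi_restrict_Ioc [NormedSpace ℝ E] (g : ℝ → E) {r : ℝ} (hr : r ∈ Ioc a b) :
    ∫ τ in Ioc a b, (Ioi r).indicator g τ = ∫ τ in r..b, g τ := by
  rw [integral_indicator measurableSet_Ioi, Measure.restrict_restrict measurableSet_Ioi,
    inter_comm, Ioc_inter_Ioi, sup_of_le_right hr.1.le, intervalIntegral.integral_of_le hr.2]

lemma integral_indicator_Iio_restrict_Ioc [NormedSpace ℝ E] (g : ℝ → E) {τ : ℝ} (hτ : τ ∈ Ioc a b) :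
    ∫ r in Ioc a b, (Iio τ).indicator g r = ∫ r in a..τ, g r := by
  have hinter : Iio τ ∩ Ioc a b = Ioo a τ := by
    ext r
    exact ⟨fun h => ⟨h.2.1, h.1⟩, fun h => ⟨h.2, h.1, h.2.le.trans hτ.2⟩⟩
  rw [integral_indicator measurableSet_Iio, Measure.restrict_restrict measurableSet_Iio, hinter,
    ← integral_Ioc_eq_integral_Ioo, intervalIntegral.integral_of_le hτ.1.le]

lemma integrable_indicator_triangle
    (hm : AEStronglyMeasurable (Function.uncurry F)
      ((volume.restrict (Ioc a b)).prod (volume.restrict (Ioc a b))))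
    (hslice : ∀ r ∈ Ioo a b, IntervalIntegrable (F · r) volume r b)
    (hnorm : IntervalIntegrable (fun r => ∫ τ in r..b, ‖F τ r‖) volume a b) :
    Integrable ({p : ℝ × ℝ | p.2 < p.1}.indicator (Function.uncurry F))
      ((volume.restrict (Ioc a b)).prod (volume.restrict (Ioc a b))) := by
  have hΔ : MeasurableSet {p : ℝ × ℝ | p.2 < p.1} :=
    measurableSet_lt measurable_snd measurable_fst
  rw [integrable_prod_iff' (hm.indicator hΔ)]
  constructor
  · filter_upwards [ae_restrict_mem measurableSet_Ioc, ae_restrict_of_ae (volume.ae_ne b)]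
      with r hr hne
    refine (integrable_indicator_iff measurableSet_Ioi (f := (F · r))).2 ?_
    rw [IntegrableOn, Measure.restrict_restrict measurableSet_Ioi, inter_comm, Ioc_inter_Ioi,
      sup_of_le_right hr.1.le]
    exact (hslice r ⟨hr.1, hr.2.lt_of_ne hne⟩).1
  · refine hnorm.1.congr ?_
    filter_upwards [ae_restrict_mem measurableSet_Ioc] with r hr
    rw [← integral_indicator_Ioi_restrict_Ioc _ hr]
    refine integral_congr_ae (.of_forall fun τ => ?_)
    exact (norm_indicator_eq_indicator_norm (s := Ioi r) (F · r) τ).symm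

lemma integral_integral_triangle_swap [NormedSpace ℝ E] (hab : a ≤ b)
    (hF : Integrable ({p : ℝ × ℝ | p.2 < p.1}.indicator (Function.uncurry F))
      ((volume.restrict (Ioc a b)).prod (volume.restrict (Ioc a b)))) :
    ∫ τ in a..b, ∫ r in a..τ, F τ r = ∫ r in a..b, ∫ τ in r..b, F τ r := by
  rw [intervalIntegral.integral_of_le hab, intervalIntegral.integral_of_le hab]
  calc ∫ τ in Ioc a b, ∫ r in a..τ, F τ r
      = ∫ τ in Ioc a b, ∫ r in Ioc a b, (Iio τ).indicator (F τ) r :=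
        setIntegral_congr_fun measurableSet_Ioc fun τ hτ =>
          (integral_indicator_Iio_restrict_Ioc (F τ) hτ).symm
    _ = ∫ r in Ioc a b, ∫ τ in Ioc a b, (Ioi r).indicator (F · r) τ :=
        integral_integral_swap hF
    _ = ∫ r in Ioc a b, ∫ τ in r..b, F τ r :=
        setIntegral_congr_fun measurableSet_Ioc fun r hr =>
          integral_indicator_Ioi_restrict_Ioc (F · r) hr

end Triangle

section Kernel

variable {α β a b t : ℝ}

lemma intervalIntegrable_sub_rpow (hα : 0 < α) (t a b : ℝ) :
    IntervalIntegrable (fun τ => (t - τ) ^ (α - 1)) volume a b := by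
  simpa using (intervalIntegral.intervalIntegrable_rpow' (a := t - a) (b := t - b)
    (by linarith : -1 < α - 1)).comp_sub_left t

lemma integral_sub_rpow (hα : 0 < α) (t a b : ℝ) :
    ∫ τ in a..b, (t - τ) ^ (α - 1) = ((t - a) ^ α - (t - b) ^ α) / α := by
  rw [intervalIntegral.integral_comp_sub_left (fun s => s ^ (α - 1)),
    integral_rpow (Or.inl (by linarith)), sub_add_cancel]

lemma integral_rpow_mul_sub_rpow (hα : 0 < α) (hβ : 0 < β) (ha : 0 < a) :
    ∫ x in (0 : ℝ)..a, x ^ (α - 1) * (a - x) ^ (β - 1) =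
      a ^ (α + β - 1) * (Gamma α * Gamma β / Gamma (α + β)) := by
  have hcomplex : ((∫ x in (0 : ℝ)..a, x ^ (α - 1) * (a - x) ^ (β - 1) : ℝ) : ℂ) =
      (a : ℂ) ^ ((α : ℂ) + β - 1) * Complex.betaIntegral α β := by
    rw [← Complex.betaIntegral_scaled (α : ℂ) β ha, ← intervalIntegral.integral_ofReal]
    refine intervalIntegral.integral_congr fun x hx => ?_
    rw [uIcc_of_le ha.le] at hx
    push_cast [Complex.ofReal_cpow hx.1, Complex.ofReal_cpow (sub_nonneg.2 hx.2)]
    rfl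
  rw [Complex.betaIntegral_eq_Gamma_mul_div _ _ (by simpa) (by simpa)] at hcomplex
  apply Complex.ofReal_injective
  rw [hcomplex]
  push_cast [Complex.ofReal_cpow ha.le, ← Complex.Gamma_ofReal]
  rfl

lemma integral_sub_rpow_mul_sub_rpow (hα : 0 < α) (hβ : 0 < β) (hab : a < b) :
    ∫ x in a..b, (b - x) ^ (β - 1) * (x - a) ^ (α - 1) =
      (b - a) ^ (α + β - 1) * (Gamma α * Gamma β / Gamma (α + β)) := by
  rw [← integral_rpow_mul_sub_rpow hα hβ (sub_pos.2 hab), ← sub_self a,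
    ← intervalIntegral.integral_comp_sub_right (fun x => x ^ (α - 1) * (b - a - x) ^ (β - 1))]
  simp only [sub_sub_sub_cancel_right, mul_comm]

lemma intervalIntegrable_sub_rpow_mul_sub_rpow (hα : 0 < α) (hβ : 0 < β) (hab : a < b) :
    IntervalIntegrable (fun x => (b - x) ^ (β - 1) * (x - a) ^ (α - 1)) volume a b := by
  have hpos : 0 < (b - a) ^ (α + β - 1) * (Gamma α * Gamma β / Gamma (α + β)) := by
    have := sub_pos.2 hab
    positivity
  -- A nonintegrable function would have integral `0`.
  refine not_imp_comm.1 intervalIntegral.integral_undef ?_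
  rw [integral_sub_rpow_mul_sub_rpow hα hβ hab]
  exact hpos.ne'

lemma integral_sub_rpow_mul_exp_le {μ : ℝ} (hα : 0 < α) (hμ : 0 < μ) (ht : 0 ≤ t) :
    ∫ τ in (0 : ℝ)..t, (t - τ) ^ (α - 1) * exp (μ * τ) ≤
      Gamma α * μ ^ (-α) * exp (μ * t) := by
  have hinteg : IntegrableOn (fun s : ℝ => s ^ (α - 1) * exp (-(μ * s))) (Ioi 0) := by
    simpa using integrableOn_rpow_mul_exp_neg_mul_rpow
      (by linarith : -1 < α - 1) one_pos hμ
  calc ∫ τ in (0 : ℝ)..t, (t - τ) ^ (α - 1) * exp (μ * τ)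
      = ∫ s in (0 : ℝ)..t, s ^ (α - 1) * exp (μ * (t - s)) := by
        simpa using intervalIntegral.integral_comp_sub_left (a := 0) (b := t)
          (fun s => s ^ (α - 1) * exp (μ * (t - s))) t
    _ = (∫ s in Ioc 0 t, s ^ (α - 1) * exp (-(μ * s))) * exp (μ * t) := by
        rw [intervalIntegral.integral_of_le ht, ← integral_mul_const]
        refine integral_congr_ae (.of_forall fun s => ?_)
        simp only [mul_assoc, ← exp_add]
        ring_nf
    _ ≤ (∫ s in Ioi 0, s ^ (α - 1) * exp (-(μ * s))) * exp (μ * t) := by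
        refine mul_le_mul_of_nonneg_right (setIntegral_mono_set hinteg ?_
          Ioc_subset_Ioi_self.eventuallyLE) (exp_pos _).le
        filter_upwards [ae_restrict_mem measurableSet_Ioi] with s hs
        exact mul_nonneg (rpow_nonneg (le_of_lt hs) _) (exp_pos _).le
    _ = Gamma α * μ ^ (-α) * exp (μ * t) := by
        rw [integral_rpow_mul_exp_neg_mul_Ioi hα hμ, one_div, inv_rpow hμ.le, ← rpow_neg hμ.le,
          mul_comm (Gamma α)]

end Kernel

section RLint

variable {E : Type*} [NormedAddCommGroup E] [NormedSpace ℝ E] {α β C T s t : ℝ} {φ ψ : ℝ → E}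

lemma intervalIntegrable_sub_rpow_smul {a b c d : ℝ} (hα : 0 < α)
    (hφ : MemLp φ ⊤ (volume.restrict (Icc c d))) (ha : a ∈ Icc c d) (hb : b ∈ Icc c d) (t : ℝ) :
    IntervalIntegrable (fun τ => (t - τ) ^ (α - 1) • φ τ) volume a b := by
  have hsub : uIoc a b ⊆ Icc c d := uIoc_subset_uIcc.trans (uIcc_subset_Icc ha hb)
  rw [intervalIntegrable_iff]
  exact (intervalIntegrable_sub_rpow hα t a b).def'.smul_of_top_left
    (hφ.mono_measure (Measure.restrict_mono_set _ hsub))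

@[simp]
lemma RLint_zero_right (α : ℝ) (φ : ℝ → E) : RLint α φ 0 = 0 := by
  simp [RLint]

lemma RLint_one (φ : ℝ → E) (t : ℝ) : RLint 1 φ t = ∫ τ in (0 : ℝ)..t, φ τ := by
  simp [RLint]

lemma RLint_congr_ae (h : φ =ᵐ[volume.restrict (Icc 0 T)] ψ) (ht : t ∈ Icc 0 T) :
    RLint α φ t = RLint α ψ t := by
  rw [EventuallyEq, ae_restrict_iff' measurableSet_Icc] at h
  rw [RLint, RLint]
  congr 1
  refine intervalIntegral.integral_congr_ae ?_
  filter_upwards [h] with τ hτ hmem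
  rw [uIoc_of_le ht.1] at hmem
  rw [hτ ⟨hmem.1.le, hmem.2.trans ht.2⟩]

lemma RLint_sub (hα : 0 < α) (hφ : MemLp φ ⊤ (volume.restrict (Icc 0 T)))
    (hψ : MemLp ψ ⊤ (volume.restrict (Icc 0 T))) (ht : t ∈ Icc 0 T) :
    RLint α (fun τ => φ τ - ψ τ) t = RLint α φ t - RLint α ψ t := by
  have h0 : (0 : ℝ) ∈ Icc 0 T := left_mem_Icc.2 (ht.1.trans ht.2)
  simp only [RLint, smul_sub]
  rw [intervalIntegral.integral_sub (intervalIntegrable_sub_rpow_smul hα hφ h0 ht t)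
    (intervalIntegrable_sub_rpow_smul hα hψ h0 ht t), smul_sub]

lemma norm_RLint_le_exp {A μ : ℝ} (hα : 0 < α) (hμ : 0 < μ) (ht : 0 ≤ t) (hA : 0 ≤ A)
    (hφ : ∀ᵐ τ, τ ∈ Ioc 0 t → ‖φ τ‖ ≤ A * exp (μ * τ)) :
    ‖RLint α φ t‖ ≤ A * μ ^ (-α) * exp (μ * t) := by
  have hΓ := Gamma_pos_of_pos hα
  rw [RLint, norm_smul, norm_inv, norm_of_nonneg hΓ.le, inv_mul_le_iff₀ hΓ]
  calc ‖∫ τ in (0 : ℝ)..t, (t - τ) ^ (α - 1) • φ τ‖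
      ≤ ∫ τ in (0 : ℝ)..t, A * ((t - τ) ^ (α - 1) * exp (μ * τ)) := by
        refine intervalIntegral.norm_integral_le_of_norm_le ht ?_
          (((intervalIntegrable_sub_rpow hα t 0 t).mul_continuousOn (by fun_prop)).const_mul A)
        filter_upwards [hφ] with τ hle hτ
        have hker : 0 ≤ (t - τ) ^ (α - 1) := rpow_nonneg (sub_nonneg.2 hτ.2) _
        rw [norm_smul, norm_of_nonneg hker, mul_left_comm]
        exact mul_le_mul_of_nonneg_left (hle hτ) hker
    _ ≤ A * (Gamma α * μ ^ (-α) * exp (μ * t)) := by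
        rw [intervalIntegral.integral_const_mul]
        exact mul_le_mul_of_nonneg_left (integral_sub_rpow_mul_exp_le hα hμ ht) hA
    _ = Gamma α * (A * μ ^ (-α) * exp (μ * t)) := by ring

lemma norm_integral_sub_rpow_smul_le (hα : 0 < α) (hst : s ≤ t)
    (hφ : ∀ᵐ τ, τ ∈ Ioc s t → ‖φ τ‖ ≤ C) :
    ‖∫ τ in s..t, (t - τ) ^ (α - 1) • φ τ‖ ≤ C / α * (t - s) ^ α := by
  calc ‖∫ τ in s..t, (t - τ) ^ (α - 1) • φ τ‖ ≤ ∫ τ in s..t, C * (t - τ) ^ (α - 1) := by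
        refine intervalIntegral.norm_integral_le_of_norm_le hst ?_
          ((intervalIntegrable_sub_rpow hα t s t).const_mul C)
        filter_upwards [hφ] with τ hle hτ
        have hker : 0 ≤ (t - τ) ^ (α - 1) := rpow_nonneg (sub_nonneg.2 hτ.2) _
        rw [norm_smul, norm_of_nonneg hker, mul_comm]
        exact mul_le_mul_of_nonneg_right (hle hτ) hker
    _ = C / α * (t - s) ^ α := by
        rw [intervalIntegral.integral_const_mul, integral_sub_rpow hα, sub_self,
          zero_rpow hα.ne']
        ring

lemma norm_integral_sub_rpow_sub_sub_rpow_smul_le (hα : 0 < α) (hα1 : α ≤ 1) (hC : 0 ≤ C)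
    (hs : 0 ≤ s) (hst : s ≤ t) (hφ : ∀ᵐ τ, τ ∈ Ioc 0 s → ‖φ τ‖ ≤ C) :
    ‖∫ τ in (0 : ℝ)..s, ((t - τ) ^ (α - 1) - (s - τ) ^ (α - 1)) • φ τ‖ ≤
      C / α * (t - s) ^ α := by
  have hs_int := intervalIntegrable_sub_rpow hα s 0 s
  have ht_int := intervalIntegrable_sub_rpow hα t 0 s
  calc ‖∫ τ in (0 : ℝ)..s, ((t - τ) ^ (α - 1) - (s - τ) ^ (α - 1)) • φ τ‖
      ≤ ∫ τ in (0 : ℝ)..s, C * ((s - τ) ^ (α - 1) - (t - τ) ^ (α - 1)) := by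
        refine intervalIntegral.norm_integral_le_of_norm_le hs ?_
          ((hs_int.sub ht_int).const_mul C)
        filter_upwards [hφ, volume.ae_ne s] with τ hle hne hτ
        have hker : (t - τ) ^ (α - 1) ≤ (s - τ) ^ (α - 1) :=
          rpow_le_rpow_of_nonpos (sub_pos.2 (hτ.2.lt_of_ne hne)) (by linarith) (by linarith)
        rw [norm_smul, norm_of_nonpos (sub_nonpos.2 hker), neg_sub, mul_comm]
        exact mul_le_mul_of_nonneg_right (hle hτ) (sub_nonneg.2 hker)
    _ = C / α * (s ^ α - t ^ α + (t - s) ^ α) := by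
        rw [intervalIntegral.integral_const_mul, intervalIntegral.integral_sub hs_int ht_int,
          integral_sub_rpow hα, integral_sub_rpow hα, sub_self, zero_rpow hα.ne']
        ring_nf
    _ ≤ C / α * (t - s) ^ α := by
        gcongr
        linarith [rpow_le_rpow hs hst hα.le]

lemma norm_RLint_sub_RLint_le_of_le (hα : 0 < α) (hα1 : α ≤ 1)
    (hm : AEStronglyMeasurable φ (volume.restrict (Icc 0 T))) (hC : 0 ≤ C)
    (hφ : ∀ᵐ τ ∂volume.restrict (Icc 0 T), ‖φ τ‖ ≤ C) (hs : 0 ≤ s) (hst : s ≤ t) (ht : t ≤ T) :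
    ‖RLint α φ t - RLint α φ s‖ ≤ 2 * C / Gamma (α + 1) * (t - s) ^ α := by
  have hΓ := Gamma_pos_of_pos hα
  have h0T : (0 : ℝ) ∈ Icc 0 T := ⟨le_rfl, by linarith⟩
  have hsT : s ∈ Icc 0 T := ⟨hs, hst.trans ht⟩
  have htT : t ∈ Icc 0 T := ⟨hs.trans hst, ht⟩
  have hLinf := memLp_top_of_bound hm C hφ
  rw [ae_restrict_iff' measurableSet_Icc] at hφ
  have hsplit : RLint α φ t - RLint α φ s = (Gamma α)⁻¹ •
      ((∫ τ in (0 : ℝ)..s, ((t - τ) ^ (α - 1) - (s - τ) ^ (α - 1)) • φ τ) +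
        ∫ τ in s..t, (t - τ) ^ (α - 1) • φ τ) := by
    have hinteg := fun r => intervalIntegrable_sub_rpow_smul hα hLinf h0T hsT r
    simp only [sub_smul]
    rw [intervalIntegral.integral_sub (hinteg t) (hinteg s), sub_add_eq_add_sub,
      intervalIntegral.integral_add_adjacent_intervals (hinteg t)
        (intervalIntegrable_sub_rpow_smul hα hLinf hsT htT t), smul_sub, RLint, RLint]
  have hold := norm_integral_sub_rpow_sub_sub_rpow_smul_le hα hα1 hC hs hst
    (hφ.mono fun τ h hτ => h ⟨hτ.1.le, hτ.2.trans hsT.2⟩)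
  have hnew := norm_integral_sub_rpow_smul_le hα hst
    (hφ.mono fun τ h hτ => h ⟨hs.trans hτ.1.le, hτ.2.trans ht⟩)
  rw [hsplit, norm_smul, norm_inv, norm_of_nonneg hΓ.le, inv_mul_le_iff₀ hΓ]
  refine (norm_add_le_of_le hold hnew).trans_eq ?_
  rw [Gamma_add_one hα.ne']
  field_simp
  ring

lemma norm_RLint_sub_RLint_le (hα : 0 < α) (hα1 : α ≤ 1)
    (hm : AEStronglyMeasurable φ (volume.restrict (Icc 0 T))) (hC : 0 ≤ C)
    (hφ : ∀ᵐ τ ∂volume.restrict (Icc 0 T), ‖φ τ‖ ≤ C) (ht : t ∈ Icc 0 T) (hs : s ∈ Icc 0 T) :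
    ‖RLint α φ t - RLint α φ s‖ ≤ 2 * C / Gamma (α + 1) * |t - s| ^ α := by
  rcases le_total s t with hst | hts
  · rw [abs_of_nonneg (sub_nonneg.2 hst)]
    exact norm_RLint_sub_RLint_le_of_le hα hα1 hm hC hφ hs.1 hst ht.2
  · rw [norm_sub_rev, abs_sub_comm, abs_of_nonneg (sub_nonneg.2 hts)]
    exact norm_RLint_sub_RLint_le_of_le hα hα1 hm hC hφ ht.1 hts hs.2

lemma continuousOn_RLint (hα : 0 < α) (hα1 : α ≤ 1)
    (hφ : MemLp φ ⊤ (volume.restrict (Icc 0 T))) : ContinuousOn (RLint α φ) (Icc 0 T) := by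
  set C := lpNorm φ ⊤ (volume.restrict (Icc 0 T))
  intro s hs
  refine tendsto_iff_norm_sub_tendsto_zero.2 (squeeze_zero' (.of_forall fun _ => norm_nonneg _)
    (eventually_mem_nhdsWithin.mono fun t ht => norm_RLint_sub_RLint_le hα hα1 hφ.1
      lpNorm_nonneg (ae_le_lpNorm_exponent_top hφ) ht hs) ?_)
  have hcont : Continuous fun t => 2 * C / Gamma (α + 1) * |t - s| ^ α :=
    continuous_const.mul ((by fun_prop : Continuous fun t => |t - s|).rpow_const
      fun _ => Or.inr hα.le)
  simpa [zero_rpow hα.ne'] using (hcont.tendsto s).mono_left nhdsWithin_le_nhds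

lemma integrable_indicator_RLint_RLint (hα : 0 < α) (hβ : 0 < β)
    (hφ : MemLp φ ⊤ (volume.restrict (Icc 0 t))) (ht : 0 ≤ t) :
    Integrable ({p : ℝ × ℝ | p.2 < p.1}.indicator (Function.uncurry fun τ r =>
        ((t - τ) ^ (β - 1) * (τ - r) ^ (α - 1)) • φ r))
      ((volume.restrict (Ioc 0 t)).prod (volume.restrict (Ioc 0 t))) := by
  have hm : AEStronglyMeasurable φ (volume.restrict (Ioc 0 t)) :=
    hφ.1.mono_measure (Measure.restrict_mono_set _ Ioc_subset_Icc_self)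
  refine integrable_indicator_triangle (.smul ?_ hm.comp_snd) (fun r hr => ?_) ?_
  · exact Measurable.aestronglyMeasurable (by fun_prop)
  · have hker := (intervalIntegrable_sub_rpow_mul_sub_rpow hα hβ hr.2).1
    exact (intervalIntegrable_iff_integrableOn_Ioc_of_le hr.2.le).2 (hker.smul_const (φ r))
  · refine IntervalIntegrable.congr_ae (f := fun r => (Gamma α * Gamma β / Gamma (α + β)) *
      ‖(t - r) ^ (α + β - 1) • φ r‖) ?_ ?_
    · exact (intervalIntegrable_sub_rpow_smul (add_pos hα hβ) hφ (left_mem_Icc.2 ht)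
        (right_mem_Icc.2 ht) t).norm.const_mul _
    · rw [uIoc_of_le ht]
      filter_upwards [ae_restrict_mem measurableSet_Ioc, ae_restrict_of_ae (volume.ae_ne t)]
        with r hr hne
      have hrt : r < t := hr.2.lt_of_ne hne
      have hnorm : ∀ τ ∈ uIcc r t, ‖((t - τ) ^ (β - 1) * (τ - r) ^ (α - 1)) • φ r‖ =
          (t - τ) ^ (β - 1) * (τ - r) ^ (α - 1) * ‖φ r‖ := fun τ hτ => by
        rw [uIcc_of_le hrt.le] at hτ
        rw [norm_smul, norm_of_nonneg (mul_nonneg (rpow_nonneg (sub_nonneg.2 hτ.2) _)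
          (rpow_nonneg (sub_nonneg.2 hτ.1) _))]
      rw [intervalIntegral.integral_congr hnorm, intervalIntegral.integral_mul_const,
        integral_sub_rpow_mul_sub_rpow hα hβ hrt, norm_smul,
        norm_of_nonneg (rpow_nonneg (sub_nonneg.2 hrt.le) _)]
      ring

theorem RLint_RLint [CompleteSpace E] (hα : 0 < α) (hβ : 0 < β)
    (hφ : MemLp φ ⊤ (volume.restrict (Icc 0 t))) (ht : 0 ≤ t) :
    RLint β (RLint α φ) t = RLint (α + β) φ t := by
  have hΓα := (Gamma_pos_of_pos hα).ne'
  have hΓβ := (Gamma_pos_of_pos hβ).ne'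
  calc RLint β (RLint α φ) t
      = (Gamma β)⁻¹ • (Gamma α)⁻¹ • ∫ τ in (0 : ℝ)..t, ∫ r in (0 : ℝ)..τ,
          ((t - τ) ^ (β - 1) * (τ - r) ^ (α - 1)) • φ r := by
        simp only [RLint, mul_smul, intervalIntegral.integral_smul]
        congr 1
        rw [← intervalIntegral.integral_smul]
        simp only [smul_comm (Gamma α)⁻¹]
    _ = (Gamma β)⁻¹ • (Gamma α)⁻¹ • ∫ r in (0 : ℝ)..t,
          (∫ τ in r..t, (t - τ) ^ (β - 1) * (τ - r) ^ (α - 1)) • φ r := by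
        rw [integral_integral_triangle_swap ht (integrable_indicator_RLint_RLint hα hβ hφ ht)]
        simp only [intervalIntegral.integral_smul_const]
    _ = (Gamma β)⁻¹ • (Gamma α)⁻¹ • ∫ r in (0 : ℝ)..t,
          (Gamma α * Gamma β / Gamma (α + β)) • (t - r) ^ (α + β - 1) • φ r := by
        congr 2
        refine intervalIntegral.integral_congr_ae ?_
        filter_upwards [volume.ae_ne t] with r hne hr
        rw [uIoc_of_le ht] at hr
        rw [integral_sub_rpow_mul_sub_rpow hα hβ (hr.2.lt_of_ne hne), smul_smul, mul_comm]
    _ = RLint (α + β) φ t := by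
        rw [intervalIntegral.integral_smul, smul_smul, smul_smul, RLint]
        congr 1
        field_simp

lemma RLderiv_eq_deriv_RLint (α : ℝ) (x : ℝ → E) (t : ℝ) :
    RLderiv α x t = deriv (RLint (1 - α) x) t := by
  rw [RLderiv, ← sub_sub_cancel_left 1 α]
  rfl

lemma RLint_congr (h : EqOn φ ψ (Icc 0 t)) (ht : 0 ≤ t) : RLint α φ t = RLint α ψ t :=
  RLint_congr_ae ((ae_restrict_mem measurableSet_Icc).mono h) (right_mem_Icc.2 ht)

lemma eq_initial_value_of_eq_add_RLint {x : ℝ → E} {x₀ : E} (hT : 0 ≤ T)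
    (hx : ∀ t ∈ Icc 0 T, x t = x₀ + RLint α φ t) : x 0 = x₀ := by
  simpa using hx 0 (left_mem_Icc.2 hT)

lemma RLint_one_sub_eq_integral [CompleteSpace E] {x : ℝ → E} {x₀ : E} (hα : α ∈ Ioo 0 1)
    (hφ : MemLp φ ⊤ (volume.restrict (Icc 0 T)))
    (hx : ∀ t ∈ Icc 0 T, x t = x₀ + RLint α φ t) (ht : t ∈ Icc 0 T) :
    RLint (1 - α) (fun s => x s - x 0) t = ∫ τ in (0 : ℝ)..t, φ τ := by
  have hx0 : x 0 = x₀ := eq_initial_value_of_eq_add_RLint (ht.1.trans ht.2) hx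
  have hsub : Icc 0 t ⊆ Icc 0 T := Icc_subset_Icc_right ht.2
  have hincr : EqOn (fun s => x s - x 0) (RLint α φ) (Icc 0 t) := fun s hs => by
    simp [hx s (hsub hs), hx0]
  rw [RLint_congr hincr ht.1, RLint_RLint hα.1 (sub_pos.2 hα.2)
    (hφ.mono_measure (Measure.restrict_mono_set _ hsub)) ht.1, add_sub_cancel, RLint_one]

theorem ae_CapDeriv_eq [CompleteSpace E] {x : ℝ → E} {x₀ : E} (hα : α ∈ Ioo 0 1) (hT : 0 ≤ T)
    (hφ : MemLp φ ⊤ (volume.restrict (Icc 0 T)))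
    (hx : ∀ t ∈ Icc 0 T, x t = x₀ + RLint α φ t) :
    ∀ᵐ t ∂volume.restrict (Icc 0 T), CapDeriv α x t = φ t := by
  have hinteg : IntervalIntegrable φ volume 0 T :=
    (intervalIntegrable_iff_integrableOn_Icc_of_le hT).2 (hφ.integrable le_top)
  rw [← restrict_Ioo_eq_restrict_Icc, ae_restrict_iff' measurableSet_Ioo]
  filter_upwards [hinteg.ae_hasDerivAt_integral] with t hderiv ht
  rw [uIcc_of_le hT] at hderiv
  have hloc : RLint (1 - α) (fun s => x s - x 0) =ᶠ[𝓝 t] fun s => ∫ τ in (0 : ℝ)..s, φ τ :=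
    (eventually_of_mem (Icc_mem_nhds ht.1 ht.2)) fun s hs => RLint_one_sub_eq_integral hα hφ hx hs
  rw [CapDeriv, RLderiv_eq_deriv_RLint, hloc.deriv_eq]
  exact (hderiv ⟨ht.1.le, ht.2.le⟩ 0 (left_mem_Icc.2 hT)).deriv

end RLint

lemma exists_mul_rpow_neg_le_half {α : ℝ} (hα : 0 < α) (c : ℝ) :
    ∃ μ > 0, c * μ ^ (-α) ≤ 1 / 2 := by
  have hlim : Tendsto (fun μ : ℝ => c * μ ^ (-α)) atTop (𝓝 0) := by
    simpa using (tendsto_rpow_neg_atTop hα).const_mul c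
  exact ((eventually_gt_atTop 0).and (hlim.eventually_le_const (by norm_num))).exists

lemma le_two_mul_of_forall_le_add_half {X : Type*} {s : Set X} {u w : X → ℝ} {a : ℝ}
    (ha : 0 ≤ a) (hw : ∀ t ∈ s, 0 ≤ w t) (hbdd : ∃ M ≥ 0, ∀ t ∈ s, u t ≤ M * w t)
    (himp : ∀ M ≥ 0, (∀ t ∈ s, u t ≤ M * w t) → ∀ t ∈ s, u t ≤ (a + M / 2) * w t) :
    ∀ t ∈ s, u t ≤ 2 * a * w t := by
  obtain ⟨M, hM, hu⟩ := hbdd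
  have hiter : ∀ k : ℕ, ∀ t ∈ s, u t ≤ (2 * a + M * (1 / 2) ^ k) * w t := by
    intro k
    induction k with
    | zero => exact fun t ht => (hu t ht).trans (by gcongr; exacts [hw t ht, by linarith])
    | succ k ih =>
      refine fun t ht => (himp _ (by positivity) ih t ht).trans_eq ?_
      ring
  intro t ht
  have hlim : Tendsto (fun k : ℕ => (2 * a + M * (1 / 2) ^ k) * w t) atTop
      (𝓝 (2 * a * w t)) := by
    have hgeom := tendsto_pow_atTop_nhds_zero_of_lt_one (r := (1 / 2 : ℝ)) (by norm_num)
      (by norm_num)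
    simpa using ((hgeom.const_mul M).const_add (2 * a)).mul_const (w t)
  exact ge_of_tendsto' hlim fun k => hiter k t ht

lemma exists_le_mul_exp {u : ℝ → ℝ} {T μ : ℝ} (hμ : 0 ≤ μ) (hu : ContinuousOn u (Icc 0 T)) :
    ∃ M ≥ 0, ∀ t ∈ Icc 0 T, u t ≤ M * exp (μ * t) := by
  obtain ⟨C, hC⟩ := isCompact_Icc.exists_bound_of_continuousOn hu
  refine ⟨max C 0, le_max_right _ _, fun t ht => ?_⟩
  calc u t ≤ max C 0 := (le_abs_self _).trans ((hC t ht).trans (le_max_left _ _))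
    _ ≤ max C 0 * exp (μ * t) :=
      le_mul_of_one_le_right (le_max_right _ _) (one_le_exp (mul_nonneg hμ ht.1))

section FixedPoint

variable {X E : Type*} [TopologicalSpace X] [CompactSpace X] [NormedAddCommGroup E]
  {Φ : C(X, E) → C(X, E)} {s : Set C(X, E)} {w : X → ℝ} {W : ℝ}

lemma norm_iterate_sub_iterate_le (hΦ : MapsTo Φ s s) (hw : ∀ t, 1 ≤ w t)
    (hhalf : ∀ x ∈ s, ∀ y ∈ s, ∀ M ≥ 0, (∀ t, ‖x t - y t‖ ≤ M * w t) →
      ∀ t, ‖Φ x t - Φ y t‖ ≤ M / 2 * w t)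
    {x y : C(X, E)} (hx : x ∈ s) (hy : y ∈ s) (k : ℕ) (t : X) :
    ‖Φ^[k] x t - Φ^[k] y t‖ ≤ dist x y * (1 / 2) ^ k * w t := by
  induction k generalizing t with
  | zero =>
    rw [pow_zero, mul_one, ← dist_eq_norm]
    exact (ContinuousMap.dist_apply_le_dist t).trans (le_mul_of_one_le_right dist_nonneg (hw t))
  | succ k ih =>
    rw [Function.iterate_succ_apply', Function.iterate_succ_apply']
    refine (hhalf _ (hΦ.iterate k hx) _ (hΦ.iterate k hy) _ (by positivity) ih t).trans_eq ?_
    ring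

lemma exists_isFixedPt_of_weighted_half [CompleteSpace E] (hs : IsClosed s) (hne : s.Nonempty)
    (hΦ : MapsTo Φ s s) (hw : ∀ t, 1 ≤ w t) (hW : ∀ t, w t ≤ W)
    (hhalf : ∀ x ∈ s, ∀ y ∈ s, ∀ M ≥ 0, (∀ t, ‖x t - y t‖ ≤ M * w t) →
      ∀ t, ‖Φ x t - Φ y t‖ ≤ M / 2 * w t) :
    ∃ x ∈ s, Function.IsFixedPt Φ x := by
  -- The weighted norm is equivalent to the sup norm, so a high iterate of `Φ` is a contraction.
  obtain ⟨k, hk⟩ : ∃ k : ℕ, (1 / 2) ^ k * W.toNNReal < 1 := by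
    have hlim := (NNReal.tendsto_pow_atTop_nhds_zero_of_lt_one
      (NNReal.half_lt_self one_ne_zero)).mul_const W.toNNReal
    rw [zero_mul] at hlim
    exact (hlim.eventually_lt_const one_pos).exists
  have hcontr : ContractingWith ((1 / 2) ^ k * W.toNNReal) (hΦ.restrict Φ s s)^[k] := by
    refine ⟨mod_cast hk, LipschitzWith.of_dist_le_mul fun x y => ?_⟩
    rw [Subtype.dist_eq, MapsTo.iterate_restrict hΦ k]
    refine (ContinuousMap.dist_le (by positivity)).2 fun t => ?_
    rw [dist_eq_norm]
    calc ‖Φ^[k] x t - Φ^[k] y t‖ ≤ dist (x : C(X, E)) y * (1 / 2) ^ k * w t :=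
          norm_iterate_sub_iterate_le hΦ hw hhalf x.2 y.2 k t
      _ ≤ dist (x : C(X, E)) y * (1 / 2) ^ k * W.toNNReal := by
          gcongr
          exact (hW t).trans (Real.le_coe_toNNReal W)
      _ = ((1 / 2) ^ k * W.toNNReal : NNReal) * dist x y := by
          push_cast
          rw [Subtype.dist_eq]
          ring
  have : Nonempty s := hne.to_subtype
  have : CompleteSpace s := hs.isComplete.completeSpace_coe
  exact ⟨_, Subtype.coe_prop _, congrArg Subtype.val hcontr.isFixedPt_fixedPoint_iterate⟩

end FixedPoint

lemma exists_continuousOn_eqOn_of_weighted_half {E : Type*} [NormedAddCommGroup E]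
    [CompleteSpace E] {Φ : (ℝ → E) → ℝ → E}
    {b w : ℝ → ℝ} {T W : ℝ} (hT : 0 ≤ T) (hb : ∀ t ∈ Icc 0 T, 0 ≤ b t)
    (hw : ∀ t ∈ Icc 0 T, 1 ≤ w t) (hW : ∀ t ∈ Icc 0 T, w t ≤ W)
    (hcont : ∀ x, ContinuousOn x (Icc 0 T) → ContinuousOn (Φ x) (Icc 0 T))
    (hball : ∀ x, (∀ t ∈ Icc 0 T, ‖x t‖ ≤ b t) → ∀ t ∈ Icc 0 T, ‖Φ x t‖ ≤ b t)
    (hhalf : ∀ x y, ContinuousOn x (Icc 0 T) → ContinuousOn y (Icc 0 T) →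
      (∀ t ∈ Icc 0 T, ‖x t‖ ≤ b t) → (∀ t ∈ Icc 0 T, ‖y t‖ ≤ b t) →
      ∀ M ≥ 0, (∀ t ∈ Icc 0 T, ‖x t - y t‖ ≤ M * w t) →
        ∀ t ∈ Icc 0 T, ‖Φ x t - Φ y t‖ ≤ M / 2 * w t) :
    ∃ x, ContinuousOn x (Icc 0 T) ∧ EqOn x (Φ x) (Icc 0 T) := by
  have hext (x : C(Icc 0 T, E)) : ContinuousOn (IccExtend hT x) (Icc 0 T) :=
    x.continuous.Icc_extend'.continuousOn
  let Ψ (x : C(Icc 0 T, E)) : C(Icc 0 T, E) :=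
    ⟨(Icc 0 T).domRestrict (Φ (IccExtend hT x)), (hcont _ (hext x)).domRestrict⟩
  let s : Set C(Icc 0 T, E) := {x | ∀ t, ‖x t‖ ≤ b t}
  have hs_closed : IsClosed s := by
    simp only [s, ofPred_forall]
    exact isClosed_iInter fun t => isClosed_le (by fun_prop) continuous_const
  have hs_nonempty : s.Nonempty := ⟨0, fun t => by simpa using hb t t.2⟩
  have hbound {x : C(Icc 0 T, E)} (hx : x ∈ s) : ∀ t ∈ Icc 0 T, ‖IccExtend hT x t‖ ≤ b t :=
    fun t ht => by simpa only [IccExtend_of_mem hT x ht] using hx ⟨t, ht⟩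
  obtain ⟨x, -, hx⟩ : ∃ x ∈ s, Function.IsFixedPt Ψ x := by
    refine exists_isFixedPt_of_weighted_half hs_closed hs_nonempty
      (fun x hx t => hball _ (hbound hx) t t.2) (fun t => hw t t.2) (fun t => hW t t.2)
      fun x hx y hy M hM hle t => hhalf _ _ (hext x) (hext y) (hbound hx) (hbound hy) M hM
        (fun r hr => ?_) t t.2
    simpa only [IccExtend_of_mem hT _ hr] using hle ⟨r, hr⟩
  refine ⟨IccExtend hT x, hext x, fun t ht => ?_⟩
  rw [IccExtend_of_mem hT x ht]
  exact (DFunLike.congr_fun hx ⟨t, ht⟩).symm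

section Nemytskii

open Metric

variable {E F : Type*} [NormedAddCommGroup E] [NormedAddCommGroup F] {f : ℝ → E → F} {T c : ℝ}

lemma continuous_of_lipschitzOnWith_closedBall {g : E → F}
    (hg : ∀ r : ℝ, ∃ L : NNReal, LipschitzOnWith L g (closedBall 0 r)) : Continuous g := by
  refine continuous_iff_continuousAt.2 fun x => ?_
  obtain ⟨L, hL⟩ := hg (‖x‖ + 1)
  exact hL.continuousOn.continuousAt (closedBall_mem_nhds_of_mem (by simp))

lemma exists_lipschitzOnWith_closedBall
    (hf : ∀ r > (0 : ℝ), ∃ lam > (0 : ℝ), ∀ t ∈ Icc 0 T, ∀ x y : E,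
      ‖x‖ ≤ r → ‖y‖ ≤ r → ‖f t x - f t y‖ ≤ lam * ‖x - y‖) (r : ℝ) :
    ∃ L : NNReal, ∀ t ∈ Icc 0 T, LipschitzOnWith L (f t) (closedBall 0 r) := by
  obtain ⟨lam, hlam, hlip⟩ := hf (max r 1) (by positivity)
  refine ⟨⟨lam, hlam.le⟩, fun t ht => LipschitzOnWith.of_dist_le_mul fun x hx y hy => ?_⟩
  rw [mem_closedBall_zero_iff] at hx hy
  rw [dist_eq_norm, dist_eq_norm]
  exact hlip t ht x y (hx.trans (le_max_left _ _)) (hy.trans (le_max_left _ _))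

variable [MeasurableSpace E] [BorelSpace E] [SecondCountableTopology E]
  [MeasurableSpace F] [BorelSpace F]

lemma aemeasurable_nemytskii {s : Set ℝ} {x : ℝ → E} (hs : MeasurableSet s)
    (hmeas : ∀ y, Measurable fun t => f t y) (hcont : ∀ t ∈ s, Continuous (f t))
    (hx : ContinuousOn x s) : AEMeasurable (fun t => f t (x t)) (volume.restrict s) := by
  have hjoint : Measurable (Function.uncurry fun (t : s) y => f t y) :=
    (measurable_uncurry_of_continuous_of_measurable (u := fun y (t : s) => f t y)
      (fun t => hcont t t.2) fun y => (hmeas y).comp measurable_subtype_coe).comp measurable_swap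
  have hx' : Measurable (s.domRestrict x) := hx.domRestrict.measurable
  exact aemeasurable_restrict_of_measurable_subtype hs (hjoint.comp (measurable_id.prodMk hx'))

lemma memLp_top_nemytskii [SecondCountableTopology F] {x : ℝ → E}
    (hmeas : ∀ y, Measurable fun t => f t y) (hcont : ∀ t ∈ Icc 0 T, Continuous (f t))
    (hgrowth : ∀ t ∈ Icc 0 T, ∀ y, ‖f t y‖ ≤ (1 + ‖y‖) * c) (hx : ContinuousOn x (Icc 0 T)) :
    MemLp (fun t => f t (x t)) ⊤ (volume.restrict (Icc 0 T)) := by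
  obtain ⟨C, hC⟩ := isCompact_Icc.exists_bound_of_continuousOn hx
  refine memLp_top_of_bound
    (aemeasurable_nemytskii measurableSet_Icc hmeas hcont hx).aestronglyMeasurable
    ((1 + C) * |c|) ?_
  filter_upwards [ae_restrict_mem measurableSet_Icc] with t ht
  calc ‖f t (x t)‖ ≤ (1 + ‖x t‖) * c := hgrowth t ht _
    _ ≤ (1 + ‖x t‖) * |c| := by gcongr; exact le_abs_self c
    _ ≤ (1 + C) * |c| := by gcongr; exact hC t ht

end Nemytskii

section CaputoCauchyProblem

variable {E : Type*} [NormedAddCommGroup E] [NormedSpace ℝ E] {f : ℝ → E → E} {x₀ : E}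
  {x y : ℝ → E} {α T : ℝ}

/-- The Picard operator of the Cauchy problem: its fixed points solve the Volterra equation
`x = x₀ + I^α f(·, x(·))`. -/
def picard (α : ℝ) (f : ℝ → E → E) (x₀ : E) (x : ℝ → E) (t : ℝ) : E :=
  x₀ + RLint α (fun τ => f τ (x τ)) t

/-- Continuous solutions on `[0, T]` of the Volterra integral equation equivalent to the Caputo
Cauchy problem. Values of `x` outside `[0, T]` are irrelevant. -/
structure IsVolterraSolution (α T : ℝ) (f : ℝ → E → E) (x₀ : E) (x : ℝ → E) : Prop where
  continuousOn : ContinuousOn x (Icc 0 T)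
  eqOn_picard : EqOn x (picard α f x₀ x) (Icc 0 T)

/-- Solutions on `[0, T]` of the Caputo Cauchy problem in a normed space: `IsCaputoSol` with
`Evec n` replaced by `E`. -/
def IsCaputoSolution [MeasurableSpace E] (α T : ℝ) (f : ℝ → E → E) (x₀ : E) (x : ℝ → E) : Prop :=
  (∃ φ : ℝ → E, Measurable φ ∧
    (∃ C : ℝ, ∀ᵐ t ∂volume.restrict (Icc 0 T), ‖φ t‖ ≤ C) ∧
    ∀ t ∈ Icc 0 T, x t = x₀ + RLint α φ t) ∧
  ∀ᵐ t ∂volume.restrict (Icc 0 T), CapDeriv α x t = f t (x t)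

lemma IsCaputoSolution.isVolterraSolution [CompleteSpace E] [MeasurableSpace E] [BorelSpace E]
    [SecondCountableTopology E] (hα : α ∈ Ioo 0 1) (hT : 0 ≤ T)
    (hx : IsCaputoSolution α T f x₀ x) : IsVolterraSolution α T f x₀ x := by
  obtain ⟨⟨φ, hφ, ⟨C, hC⟩, hxφ⟩, hcap⟩ := hx
  have hLinf : MemLp φ ⊤ (volume.restrict (Icc 0 T)) :=
    memLp_top_of_bound hφ.aestronglyMeasurable C hC
  have hφf : φ =ᵐ[volume.restrict (Icc 0 T)] fun t => f t (x t) := by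
    filter_upwards [ae_CapDeriv_eq hα hT hLinf hxφ, hcap] with t h₁ h₂
    exact h₁.symm.trans h₂
  constructor
  · exact ((continuousOn_RLint hα.1 hα.2.le hLinf).const_add x₀).congr hxφ
  · intro t ht
    rw [hxφ t ht, picard, RLint_congr_ae hφf ht]

lemma IsVolterraSolution.isCaputoSolution [CompleteSpace E] [MeasurableSpace E] [BorelSpace E]
    (hα : α ∈ Ioo 0 1) (hT : 0 ≤ T) (hx : IsVolterraSolution α T f x₀ x)
    (hf : MemLp (fun t => f t (x t)) ⊤ (volume.restrict (Icc 0 T))) :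
    IsCaputoSolution α T f x₀ x := by
  refine ⟨⟨hf.1.mk _, hf.1.stronglyMeasurable_mk.measurable,
    ⟨lpNorm (fun t => f t (x t)) ⊤ (volume.restrict (Icc 0 T)), ?_⟩, fun t ht => ?_⟩,
    ae_CapDeriv_eq hα hT hf hx.eqOn_picard⟩
  · filter_upwards [hf.1.ae_eq_mk, ae_le_lpNorm_exponent_top hf] with t hmk hle
    rwa [← hmk]
  · rw [hx.eqOn_picard ht, picard, RLint_congr_ae hf.1.ae_eq_mk ht]

section Estimates

variable {cf M R μ : ℝ}

lemma one_add_norm_picard_le (hα : 0 < α) (hμ : 0 < μ) (hcf : 0 ≤ cf)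
    (hhalf : cf * μ ^ (-α) ≤ 1 / 2)
    (hgrowth : ∀ t ∈ Icc 0 T, ∀ z, ‖f t z‖ ≤ (1 + ‖z‖) * cf) (hM : 0 ≤ M)
    (hx : ∀ t ∈ Icc 0 T, 1 + ‖x t‖ ≤ M * exp (μ * t)) :
    ∀ t ∈ Icc 0 T, 1 + ‖picard α f x₀ x t‖ ≤ (1 + ‖x₀‖ + M / 2) * exp (μ * t) := by
  intro t ht
  have hRL : ‖RLint α (fun τ => f τ (x τ)) t‖ ≤ M * cf * μ ^ (-α) * exp (μ * t) := by
    refine norm_RLint_le_exp hα hμ ht.1 (by positivity) (.of_forall fun τ hτ => ?_)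
    have hτT : τ ∈ Icc 0 T := ⟨hτ.1.le, hτ.2.trans ht.2⟩
    calc ‖f τ (x τ)‖ ≤ (1 + ‖x τ‖) * cf := hgrowth τ hτT _
      _ ≤ M * exp (μ * τ) * cf := by gcongr; exact hx τ hτT
      _ = M * cf * exp (μ * τ) := by ring
  have hexp : 1 ≤ exp (μ * t) := one_le_exp (mul_nonneg hμ.le ht.1)
  calc 1 + ‖picard α f x₀ x t‖
      ≤ (1 + ‖x₀‖) + M * (cf * μ ^ (-α)) * exp (μ * t) := by
        rw [picard]
        linarith [norm_add_le x₀ (RLint α (fun τ => f τ (x τ)) t)]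
    _ ≤ (1 + ‖x₀‖) * exp (μ * t) + M * (1 / 2) * exp (μ * t) := by
        gcongr
        exact le_mul_of_one_le_right (by positivity) hexp
    _ = (1 + ‖x₀‖ + M / 2) * exp (μ * t) := by ring

lemma norm_picard_sub_picard_le {L : NNReal} (hα : 0 < α) (hμ : 0 < μ)
    (hhalf : L * μ ^ (-α) ≤ 1 / 2)
    (hlip : ∀ t ∈ Icc 0 T, LipschitzOnWith L (f t) (Metric.closedBall 0 R))
    (hfx : MemLp (fun t => f t (x t)) ⊤ (volume.restrict (Icc 0 T)))
    (hfy : MemLp (fun t => f t (y t)) ⊤ (volume.restrict (Icc 0 T)))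
    (hx : ∀ t ∈ Icc 0 T, ‖x t‖ ≤ R) (hy : ∀ t ∈ Icc 0 T, ‖y t‖ ≤ R) (hM : 0 ≤ M)
    (hxy : ∀ t ∈ Icc 0 T, ‖x t - y t‖ ≤ M * exp (μ * t)) :
    ∀ t ∈ Icc 0 T, ‖picard α f x₀ x t - picard α f x₀ y t‖ ≤ M / 2 * exp (μ * t) := by
  intro t ht
  rw [picard, picard, add_sub_add_left_eq_sub, ← RLint_sub hα hfx hfy ht]
  calc ‖RLint α (fun τ => f τ (x τ) - f τ (y τ)) t‖ ≤ L * M * μ ^ (-α) * exp (μ * t) := by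
        refine norm_RLint_le_exp hα hμ ht.1 (by positivity) (.of_forall fun τ hτ => ?_)
        have hτT : τ ∈ Icc 0 T := ⟨hτ.1.le, hτ.2.trans ht.2⟩
        calc ‖f τ (x τ) - f τ (y τ)‖ ≤ L * ‖x τ - y τ‖ :=
              (hlip τ hτT).norm_sub_le (by simpa using hx τ hτT) (by simpa using hy τ hτT)
          _ ≤ L * (M * exp (μ * τ)) := by gcongr; exact hxy τ hτT
          _ = L * M * exp (μ * τ) := by ring
    _ = M * (L * μ ^ (-α)) * exp (μ * t) := by ring
    _ ≤ M * (1 / 2) * exp (μ * t) := by gcongr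
    _ = M / 2 * exp (μ * t) := by ring

lemma IsVolterraSolution.norm_le (hα : 0 < α) (hμ : 0 < μ) (hcf : 0 ≤ cf)
    (hhalf : cf * μ ^ (-α) ≤ 1 / 2)
    (hgrowth : ∀ t ∈ Icc 0 T, ∀ z, ‖f t z‖ ≤ (1 + ‖z‖) * cf)
    (hx : IsVolterraSolution α T f x₀ x) :
    ∀ t ∈ Icc 0 T, ‖x t‖ ≤ 2 * (1 + ‖x₀‖) * exp (μ * T) := by
  have hbdd : ∃ M ≥ 0, ∀ t ∈ Icc 0 T, 1 + ‖x t‖ ≤ M * exp (μ * t) :=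
    exists_le_mul_exp hμ.le (hx.continuousOn.norm.const_add 1)
  have hweighted := le_two_mul_of_forall_le_add_half (a := 1 + ‖x₀‖) (by positivity)
    (fun t _ => (exp_pos (μ * t)).le) hbdd fun M hM hle t ht => by
      rw [hx.eqOn_picard ht]
      exact one_add_norm_picard_le hα hμ hcf hhalf hgrowth hM hle t ht
  intro t ht
  calc ‖x t‖ ≤ 1 + ‖x t‖ := by linarith
    _ ≤ 2 * (1 + ‖x₀‖) * exp (μ * t) := hweighted t ht
    _ ≤ 2 * (1 + ‖x₀‖) * exp (μ * T) := by gcongr; exact ht.2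

lemma IsVolterraSolution.norm_sub_le (hα : 0 < α) (hα1 : α ≤ 1) (hcf : 0 ≤ cf) (hR : 0 ≤ R)
    (hgrowth : ∀ t ∈ Icc 0 T, ∀ z, ‖f t z‖ ≤ (1 + ‖z‖) * cf)
    (hf : MemLp (fun t => f t (x t)) ⊤ (volume.restrict (Icc 0 T)))
    (hx : IsVolterraSolution α T f x₀ x) (hxR : ∀ t ∈ Icc 0 T, ‖x t‖ ≤ R)
    {s t : ℝ} (ht : t ∈ Icc 0 T) (hs : s ∈ Icc 0 T) :
    ‖x t - x s‖ ≤ 2 * ((1 + R) * cf) / Gamma (α + 1) * |t - s| ^ α := by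
  rw [hx.eqOn_picard ht, hx.eqOn_picard hs, picard, picard, add_sub_add_left_eq_sub]
  refine norm_RLint_sub_RLint_le hα hα1 hf.1 (by positivity) ?_ ht hs
  filter_upwards [ae_restrict_mem measurableSet_Icc] with τ hτ
  refine (hgrowth τ hτ _).trans ?_
  gcongr
  exact hxR τ hτ

lemma IsVolterraSolution.eqOn (hα : 0 < α)
    (hlip : ∀ r : ℝ, ∃ L : NNReal, ∀ t ∈ Icc 0 T, LipschitzOnWith L (f t) (Metric.closedBall 0 r))
    (hfx : MemLp (fun t => f t (x t)) ⊤ (volume.restrict (Icc 0 T)))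
    (hfy : MemLp (fun t => f t (y t)) ⊤ (volume.restrict (Icc 0 T)))
    (hx : IsVolterraSolution α T f x₀ x) (hy : IsVolterraSolution α T f x₀ y) :
    EqOn x y (Icc 0 T) := by
  obtain ⟨Rx, hRx⟩ := isCompact_Icc.exists_bound_of_continuousOn hx.continuousOn
  obtain ⟨Ry, hRy⟩ := isCompact_Icc.exists_bound_of_continuousOn hy.continuousOn
  obtain ⟨L, hL⟩ := hlip (max Rx Ry)
  obtain ⟨μ, hμ, hhalf⟩ := exists_mul_rpow_neg_le_half hα L
  have hbdd : ∃ M ≥ 0, ∀ t ∈ Icc 0 T, ‖x t - y t‖ ≤ M * exp (μ * t) :=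
    exists_le_mul_exp hμ.le (hx.continuousOn.sub hy.continuousOn).norm
  have hzero := le_two_mul_of_forall_le_add_half le_rfl
    (fun t _ => (exp_pos (μ * t)).le) hbdd fun M hM hle t ht => by
      rw [zero_add, hx.eqOn_picard ht, hy.eqOn_picard ht]
      exact norm_picard_sub_picard_le hα hμ hhalf hL hfx hfy
        (fun t ht => (hRx t ht).trans (le_max_left _ _))
        (fun t ht => (hRy t ht).trans (le_max_right _ _)) hM hle t ht
  intro t ht
  simpa [sub_eq_zero] using hzero t ht

lemma continuousOn_picard (hα : 0 < α) (hα1 : α ≤ 1) (x₀ : E)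
    (hf : MemLp (fun t => f t (x t)) ⊤ (volume.restrict (Icc 0 T))) :
    ContinuousOn (picard α f x₀ x) (Icc 0 T) :=
  (continuousOn_RLint hα hα1 hf).const_add x₀

theorem exists_isVolterraSolution [CompleteSpace E] (hα : 0 < α) (hα1 : α ≤ 1) (hT : 0 ≤ T)
    (hcf : 0 ≤ cf) (hgrowth : ∀ t ∈ Icc 0 T, ∀ z, ‖f t z‖ ≤ (1 + ‖z‖) * cf)
    (hlip : ∀ r : ℝ, ∃ L : NNReal, ∀ t ∈ Icc 0 T, LipschitzOnWith L (f t) (Metric.closedBall 0 r))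
    (hmem : ∀ x : ℝ → E, ContinuousOn x (Icc 0 T) →
      MemLp (fun t => f t (x t)) ⊤ (volume.restrict (Icc 0 T))) (x₀ : E) :
    ∃ x, IsVolterraSolution α T f x₀ x := by
  obtain ⟨μ, hμ, hμhalf⟩ := exists_mul_rpow_neg_le_half hα cf
  obtain ⟨L, hL⟩ := hlip (2 * (1 + ‖x₀‖) * exp (μ * T))
  obtain ⟨ν, hν, hνhalf⟩ := exists_mul_rpow_neg_le_half hα L
  suffices ∃ x, ContinuousOn x (Icc 0 T) ∧ EqOn x (picard α f x₀ x) (Icc 0 T) from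
    this.imp fun x hx => ⟨hx.1, hx.2⟩
  refine exists_continuousOn_eqOn_of_weighted_half
    (b := fun t => 2 * (1 + ‖x₀‖) * exp (μ * t) - 1) (w := fun t => exp (ν * t))
    (W := exp (ν * T)) hT (fun t ht => ?_) (fun t ht => one_le_exp (mul_nonneg hν.le ht.1))
    (fun t ht => by gcongr; exact ht.2) (fun x hx => continuousOn_picard hα hα1 x₀ (hmem x hx))
    (fun x hx t ht => ?_) fun x y hx hy hxb hyb M hM hxy => ?_
  · nlinarith [norm_nonneg x₀, one_le_exp (mul_nonneg hμ.le ht.1)]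
  · have hpicard := one_add_norm_picard_le (x₀ := x₀) hα hμ hcf hμhalf hgrowth (by positivity)
      (fun t ht => le_sub_iff_add_le'.1 (hx t ht)) t ht
    linarith
  · have hball {z : ℝ → E} (hz : ∀ t ∈ Icc 0 T, ‖z t‖ ≤ 2 * (1 + ‖x₀‖) * exp (μ * t) - 1) :
        ∀ t ∈ Icc 0 T, ‖z t‖ ≤ 2 * (1 + ‖x₀‖) * exp (μ * T) := fun t ht => by
      refine (hz t ht).trans ((sub_le_self _ zero_le_one).trans ?_)
      gcongr
      exact ht.2
    exact norm_picard_sub_picard_le hα hν hνhalf hL (hmem x hx) (hmem y hy) (hball hxb)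
      (hball hyb) hM hxy

end Estimates

theorem stmt10_general [CompleteSpace E] [MeasurableSpace E] [BorelSpace E]
    [SecondCountableTopology E] {cf : ℝ} (hα : α ∈ Ioo 0 1) (hT : 0 ≤ T) (hcf : 0 < cf)
    (hmeas : ∀ z, Measurable fun t => f t z)
    (hlip : ∀ r : ℝ, ∃ L : NNReal, ∀ t ∈ Icc 0 T, LipschitzOnWith L (f t) (Metric.closedBall 0 r))
    (hgrowth : ∀ t ∈ Icc 0 T, ∀ z, ‖f t z‖ ≤ (1 + ‖z‖) * cf) :
    (∀ x₀, ∃ x, IsCaputoSolution α T f x₀ x ∧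
      ∀ x', IsCaputoSolution α T f x₀ x' → EqOn x' x (Icc 0 T)) ∧
    ∀ R₀ ≥ 0, ∃ R H : ℝ, 0 < R ∧ 0 < H ∧ ∀ x₀ x, ‖x₀‖ ≤ R₀ → IsCaputoSolution α T f x₀ x →
      ∀ t ∈ Icc 0 T, ∀ τ ∈ Icc 0 T, ‖x t‖ ≤ R ∧ ‖x t - x τ‖ ≤ H * |t - τ| ^ α := by
  have hmem (x : ℝ → E) (hx : ContinuousOn x (Icc 0 T)) :
      MemLp (fun t => f t (x t)) ⊤ (volume.restrict (Icc 0 T)) :=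
    memLp_top_nemytskii hmeas (fun t ht => continuous_of_lipschitzOnWith_closedBall fun r =>
      (hlip r).imp fun _ hL => hL t ht) hgrowth hx
  constructor
  · intro x₀
    obtain ⟨x, hx⟩ := exists_isVolterraSolution hα.1 hα.2.le hT hcf.le hgrowth hlip hmem x₀
    refine ⟨x, hx.isCaputoSolution hα hT (hmem x hx.continuousOn), fun x' hx' => ?_⟩
    have hx'V := hx'.isVolterraSolution hα hT
    exact hx'V.eqOn hα.1 hlip (hmem x' hx'V.continuousOn) (hmem x hx.continuousOn) hx
  · intro R₀ hR₀
    obtain ⟨μ, hμ, hhalf⟩ := exists_mul_rpow_neg_le_half hα.1 cf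
    set R := 2 * (1 + R₀) * exp (μ * T)
    have hR : 0 < R := by positivity
    have hΓ : 0 < Gamma (α + 1) := Gamma_pos_of_pos (by linarith [hα.1])
    refine ⟨R, 2 * ((1 + R) * cf) / Gamma (α + 1), hR, by positivity,
      fun x₀ x hx₀ hx t ht τ hτ => ?_⟩
    have hxV := hx.isVolterraSolution hα hT
    have hxR : ∀ s ∈ Icc 0 T, ‖x s‖ ≤ R := fun s hs =>
      (hxV.norm_le hα.1 hμ hcf.le hhalf hgrowth s hs).trans (by simp only [R]; gcongr)
    exact ⟨hxR t ht, hxV.norm_sub_le hα.1 hα.2.le hcf.le hR.le hgrowth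
      (hmem x hxV.continuousOn) hxR ht hτ⟩

end CaputoCauchyProblem

theorem stmt10 (α T R₀ : ℝ) (hα : α ∈ Ioo (0:ℝ) 1) (hT : 0 < T) (hR₀ : 0 < R₀) (n : ℕ)
    (f : ℝ → Evec n → Evec n)
    (hf1 : ∀ x : Evec n, Measurable fun t => f t x)
    (hf2 : ∀ r > (0:ℝ), ∃ lam > (0:ℝ), ∀ t ∈ Icc (0:ℝ) T, ∀ x y : Evec n,
      ‖x‖ ≤ r → ‖y‖ ≤ r → ‖f t x - f t y‖ ≤ lam * ‖x - y‖)
    (cf : ℝ) (hcf : 0 < cf)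
    (hf3 : ∀ t ∈ Icc (0:ℝ) T, ∀ x : Evec n, ‖f t x‖ ≤ (1 + ‖x‖) * cf) :
    (∀ x₀ : Evec n, ‖x₀‖ ≤ R₀ →
      ∃ x : ℝ → Evec n, IsCaputoSol α T f x₀ x ∧
        ∀ x' : ℝ → Evec n, IsCaputoSol α T f x₀ x' → EqOn x' x (Icc (0:ℝ) T)) ∧
    ∃ R H : ℝ, 0 < R ∧ 0 < H ∧ ∀ (x₀ : Evec n) (x : ℝ → Evec n), ‖x₀‖ ≤ R₀ →
      IsCaputoSol α T f x₀ x →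
      ∀ t ∈ Icc (0:ℝ) T, ∀ τ ∈ Icc (0:ℝ) T,
        ‖x t‖ ≤ R ∧ ‖x t - x τ‖ ≤ H * |t - τ| ^ α := by
  have h := stmt10_general hα hT.le hcf hf1 (exists_lipschitzOnWith_closedBall hf2) hf3
  exact ⟨fun x₀ _ => h.1 x₀, h.2 R₀ hR₀.le⟩
end
end
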